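/- Let α_1, α_2, α_3, β_1, β_2 be complex numbers with Re(β_1 + β_2 − α_1 − α_2 − α_3) > 0 and Re(α_3 − β_1 + 1) > 0, and such that β_1, β_2 and the lower parameters of the series on the right-hand side are not nonpositive integers and none of the Gamma factors is evaluated at a pole. Then ₃F₂(α_1,α_2,α_3; β_1,β_2; 1) = [Γ(β_1)Γ(β_1−α_1−α_2)/(Γ(β_1−α_1)Γ(β_1−α_2))]·₃F₂(α_1, α_2, β_2−α_3; α_1+α_2−β_1+1, β_2; 1) + [Γ(β_1)Γ(β_2)Γ(α_1+α_2−β_1)Γ(β_1+β_2−α_1−α_2−α_3)/(Γ(α_1)Γ(α_2)Γ(β_2−α_3)Γ(β_1+β_2−α_1−α_2))]·₃F₂(β_1−α_1, β_1−α_2, β_1+β_2−α_1−α_2−α_3; β_1−α_1−α_2+1, β_1+β_2−α_1−α_2; 1). -/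

import Mathlib

/-- The ascending Pochhammer symbol `(x)_n`. -/
noncomputable def poch (x : ℂ) (n : ℕ) : ℂ := (ascPochhammer ℂ n).eval x

/-- The generalized hypergeometric series `₃F₂(a₁,a₂,a₃; b₁,b₂; 1)`. -/
noncomputable def F32 (a1 a2 a3 b1 b2 : ℂ) : ℂ :=
  ∑' n : ℕ, poch a1 n * poch a2 n * poch a3 n / ((n.factorial : ℂ) * poch b1 n * poch b2 n)

/-- `z` is not a nonpositive integer (i.e. `Γ` is not evaluated at a pole at `z`). -/
def NotPole (z : ℂ) : Prop := ∀ n : ℕ, z ≠ -(n : ℂ)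

/-!
Divide every series by the `Γ` of its lower parameters: the three-term relation then becomes an
identity between functions holomorphic in all parameters, and the `Γ` factors that have poles turn
into sines.

Integrating `₂F₁(a, b; d; t)` against the beta weight `t ^ (c - 1) * (1 - t) ^ (e - c - 1)` gives
`₃F₂(a, b, c; d, e; 1)`, so integrating the connection formula of `₂F₁` between `0` and `1` against
this weight gives the three-term relation, for parameters in a small open set; the rest is analytic
continuation along complex lines in parameter space.

The connection formula itself is obtained from the same integrals. In the variable `t / (1 - t)`
the weight with `e = a` is a Mellin kernel times a factor independent of `c`, so it suffices that
the three-term relation holds for `e = a` along a vertical line of values of `c`. There each `₃F₂`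
degenerates to a `₂F₁` at `1`, Gauss's theorem evaluates it, and what remains is a trigonometric
identity.
-/

open Complex Filter MeasureTheory Set Topology
open scoped Nat Real

theorem poch_zero (a : ℂ) : poch a 0 = 1 := by
  simp [poch]

theorem poch_succ (a : ℂ) (n : ℕ) : poch a (n + 1) = poch a n * (a + n) :=
  ascPochhammer_succ_eval n a

/-- A constant, bounded locally uniformly in `x`, for the comparison of `(m + x)_n` with `(m)_n`. -/
noncomputable def growthConst (x : ℂ) : ℝ := Real.exp (‖x‖ + ‖x‖ ^ 2)

theorem growthConst_pos (x : ℂ) : 0 < growthConst x :=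
  Real.exp_pos _

theorem norm_one_add_le_exp (w : ℂ) : ‖1 + w‖ ≤ Real.exp (w.re + ‖w‖ ^ 2 / 2) := by
  have hsq : ‖1 + w‖ ^ 2 = 2 * w.re + ‖w‖ ^ 2 + 1 := by
    rw [← normSq_eq_norm_sq, ← normSq_eq_norm_sq, normSq_add]
    simp only [map_one, one_mul, conj_re]
    ring
  refine le_of_sq_le_sq ?_ (Real.exp_pos _).le
  calc ‖1 + w‖ ^ 2 ≤ Real.exp (2 * w.re + ‖w‖ ^ 2) := hsq ▸ Real.add_one_le_exp _
    _ = Real.exp (w.re + ‖w‖ ^ 2 / 2) ^ 2 := by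
      rw [← Real.exp_nat_mul]
      congr 1
      push_cast
      ring

theorem norm_add_le_mul_rpow_mul_exp (x : ℂ) {k : ℝ} (hk : 1 ≤ k) :
    ‖k + x‖ ≤ k * ((k + 1) / k) ^ x.re *
      Real.exp ((‖x‖ + ‖x‖ ^ 2) * (1 / k - 1 / (k + 1))) := by
  have hk₀ : 0 < k := one_pos.trans_le hk
  have hnorm : ‖(k : ℂ)‖ = k := by rw [norm_real, Real.norm_of_nonneg hk₀.le]
  have hratio : 0 < (k + 1) / k := by positivity
  set L := Real.log ((k + 1) / k)
  have hL_le : L ≤ 1 / k := by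
    convert Real.log_le_sub_one_of_pos hratio using 1
    field_simp
    ring
  have hL_ge : 1 / (k + 1) ≤ L := by
    convert Real.one_sub_inv_le_log_of_pos hratio using 1
    field_simp
    ring
  have hlinear : x.re * (1 / k - L) ≤ ‖x‖ * (1 / k - 1 / (k + 1)) := by
    have := re_le_norm x
    gcongr
  have hquadratic : ‖x / k‖ ^ 2 / 2 ≤ ‖x‖ ^ 2 * (1 / k - 1 / (k + 1)) := by
    have : 1 / (2 * k ^ 2) ≤ 1 / k - 1 / (k + 1) := by
      rw [div_sub_div _ _ (by positivity) (by positivity),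
        div_le_div_iff₀ (by positivity) (by positivity)]
      nlinarith
    calc ‖x / k‖ ^ 2 / 2 = ‖x‖ ^ 2 * (1 / (2 * k ^ 2)) := by
          rw [norm_div, hnorm]
          field_simp
      _ ≤ _ := by gcongr
  have hre : (x / k).re = x.re * (1 / k - L) + L * x.re := by
    rw [div_ofReal_re]
    ring
  calc ‖k + x‖ = k * ‖1 + x / k‖ := by
        nth_rw 2 [← hnorm]
        rw [← norm_mul, mul_add, mul_one, mul_div_cancel₀ _ (ofReal_ne_zero.mpr hk₀.ne')]
    _ ≤ k * Real.exp (L * x.re + (‖x‖ + ‖x‖ ^ 2) * (1 / k - 1 / (k + 1))) := by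
        gcongr
        refine (norm_one_add_le_exp _).trans (Real.exp_le_exp.mpr ?_)
        linarith
    _ = _ := by rw [Real.exp_add, Real.rpow_def_of_pos hratio, mul_assoc]

theorem norm_poch_add_le_mul_exp {m : ℝ} (hm : 1 ≤ m) (x : ℂ) (n : ℕ) :
    ‖poch (m + x) n‖ ≤ ‖poch m n‖ * ((m + n) / m) ^ x.re *
      Real.exp ((‖x‖ + ‖x‖ ^ 2) * (1 / m - 1 / (m + n))) := by
  have hm₀ : 0 < m := one_pos.trans_le hm
  induction n with
  | zero => simp [poch_zero, hm₀.ne']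
  | succ n ih =>
    have hmn : 0 < m + n := by positivity
    have hstep : ‖(m : ℂ) + x + n‖ ≤ (m + n) * ((m + n + 1) / (m + n)) ^ x.re *
        Real.exp ((‖x‖ + ‖x‖ ^ 2) * (1 / (m + n) - 1 / (m + n + 1))) := by
      convert norm_add_le_mul_rpow_mul_exp x (k := m + n) (by linarith [n.cast_nonneg (α := ℝ)])
        using 2
      push_cast
      ring
    have hpoch : ‖poch m (n + 1)‖ = ‖poch m n‖ * (m + n) := by
      rw [poch_succ, norm_mul]
      congr 1
      rw [← ofReal_natCast, ← ofReal_add, norm_real, Real.norm_of_nonneg hmn.le]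
    have hratio : (m + (n + 1 : ℕ)) / m = (m + n) / m * ((m + n + 1) / (m + n)) := by
      push_cast
      field_simp
      ring
    rw [poch_succ, norm_mul, hpoch, hratio, Real.mul_rpow (by positivity) (by positivity)]
    refine (mul_le_mul ih hstep (norm_nonneg _) (by positivity)).trans_eq ?_
    rw [mul_mul_mul_comm, ← Real.exp_add, mul_mul_mul_comm]
    congr 2
    push_cast
    ring

theorem norm_poch_add_le {m : ℝ} (hm : 1 ≤ m) (x : ℂ) (n : ℕ) :
    ‖poch (m + x) n‖ ≤ ‖poch m n‖ * ((m + n) / m) ^ x.re * growthConst x := by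
  have hm₀ : 0 < m := one_pos.trans_le hm
  refine (norm_poch_add_le_mul_exp hm x n).trans ?_
  rw [growthConst]
  gcongr
  refine mul_le_of_le_one_right (by positivity) ?_
  have h₁ : 1 / m ≤ 1 := (div_le_one hm₀).mpr hm
  have h₂ : 0 ≤ 1 / (m + n) := by positivity
  linarith

theorem norm_poch_le (a : ℂ) (n : ℕ) :
    ‖poch a n‖ ≤ n ! * (n + 1 : ℝ) ^ (a.re - 1) * growthConst (a - 1) := by
  have hone : poch 1 n = n ! := ascPochhammer_eval_one ℂ n
  simpa [hone, add_comm] using norm_poch_add_le le_rfl (a - 1) n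

theorem prod_range_add_eq_poch (s : ℂ) (n : ℕ) : ∏ j ∈ Finset.range n, (s + j) = poch s n := by
  induction n with
  | zero => simp [poch_zero]
  | succ n ih => rw [Finset.prod_range_succ, ih, poch_succ]

theorem poch_ne_zero {z : ℂ} (hz : NotPole z) (n : ℕ) : poch z n ≠ 0 := by
  rw [← prod_range_add_eq_poch, Finset.prod_ne_zero_iff]
  exact fun j _ h ↦ hz j (eq_neg_of_add_eq_zero_left h)

theorem notPole_of_re_pos {z : ℂ} (hz : 0 < z.re) : NotPole z := by
  rintro n rfl
  simp only [neg_re, natCast_re, Left.neg_pos_iff] at hz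
  linarith [n.cast_nonneg (α := ℝ)]

theorem norm_GammaSeq_div_GammaSeq_le {m : ℝ} (hm : 1 ≤ m) (x : ℂ) {N : ℕ} (hN : 0 < N) :
    ‖GammaSeq m N / GammaSeq (m + x) N‖ ≤
      ((m + (N + 1 : ℕ)) / m / N) ^ x.re * growthConst x := by
  have hN₀ : (N : ℂ) ≠ 0 := by exact_mod_cast hN.ne'
  have hm₀ : 0 < m := one_pos.trans_le hm
  have hpoch : poch m (N + 1) ≠ 0 := poch_ne_zero (notPole_of_re_pos (by simpa using hm₀)) _
  have hfact : (N ! : ℂ) ≠ 0 := by exact_mod_cast N.factorial_ne_zero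
  have hquot : GammaSeq m N / GammaSeq (m + x) N =
      poch (m + x) (N + 1) / (poch m (N + 1) * (N : ℂ) ^ x) := by
    have hpow : (N : ℂ) ^ (m : ℂ) ≠ 0 := by simp [cpow_eq_zero_iff, hN₀]
    rw [GammaSeq, GammaSeq, prod_range_add_eq_poch, prod_range_add_eq_poch, cpow_add _ _ hN₀]
    generalize poch (m + x) (N + 1) = p
    rcases eq_or_ne p 0 with rfl | hp
    · simp
    · field_simp
  rw [hquot, norm_div, norm_mul, norm_natCast_cpow_of_pos hN,
    div_le_iff₀ (by have := norm_pos_iff.mpr hpoch; positivity),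
    Real.div_rpow (by positivity) (by positivity)]
  refine (norm_poch_add_le hm x (N + 1)).trans_eq ?_
  have : (N : ℝ) ^ x.re ≠ 0 := by positivity
  field_simp

theorem norm_Gamma_div_Gamma_add_le {m : ℝ} (hm : 1 ≤ m) (x : ℂ) :
    ‖Gamma m / Gamma (m + x)‖ ≤ m ^ (-x.re) * growthConst x := by
  have hm₀ : 0 < m := one_pos.trans_le hm
  rcases eq_or_ne (Gamma (m + x)) 0 with hG | hG
  · rw [hG, div_zero, norm_zero]
    exact mul_nonneg (by positivity) (growthConst_pos x).le
  have hbase : Tendsto (fun N : ℕ ↦ (m + (N + 1 : ℕ)) / m / N) atTop (𝓝 m⁻¹) := by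
    have : Tendsto (fun N : ℕ ↦ (m + 1) / m / N + m⁻¹) atTop (𝓝 (0 + m⁻¹)) :=
      (tendsto_const_div_atTop_nhds_zero_nat _).add_const _
    rw [zero_add] at this
    refine this.congr' ?_
    filter_upwards [eventually_gt_atTop 0] with N hN
    push_cast
    field_simp
    ring
  have hbound := (hbase.rpow_const (p := x.re) (.inl (by positivity))).mul_const (growthConst x)
  rw [Real.inv_rpow hm₀.le, ← Real.rpow_neg hm₀.le] at hbound
  refine le_of_tendsto_of_tendsto
    ((GammaSeq_tendsto_Gamma m).div (GammaSeq_tendsto_Gamma (m + x)) hG).norm hbound ?_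
  filter_upwards [eventually_gt_atTop 0] with N hN using norm_GammaSeq_div_GammaSeq_le hm x hN

theorem norm_inv_Gamma_add_natCast_le (d : ℂ) (n : ℕ) :
    ‖(Gamma (d + n))⁻¹‖ ≤ (n + 1 : ℝ) ^ (1 - d.re) / n ! * growthConst (d - 1) := by
  have hshift : ((n + 1 : ℝ) : ℂ) + (d - 1) = d + n := by
    push_cast
    ring
  have hGamma : Gamma ((n + 1 : ℝ) : ℂ) = n ! := by
    push_cast
    exact Gamma_nat_eq_factorial n
  have hfact : (0 : ℝ) < n ! := by positivity
  have := norm_Gamma_div_Gamma_add_le (m := n + 1) (by linarith [n.cast_nonneg (α := ℝ)]) (d - 1)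
  rw [hshift, hGamma, div_eq_mul_inv, norm_mul, norm_natCast] at this
  rw [div_mul_eq_mul_div, le_div_iff₀' hfact]
  simpa using this

/-- Regularised `₃F₂(a, b, c; d, e; 1)`, that is, `₃F₂(a, b, c; d, e; 1) / (Γ(d) Γ(e))` continued
holomorphically to all parameters with `Re (d + e - a - b - c) > 0`. -/
noncomputable def regularizedF32 (a b c d e : ℂ) : ℂ := regularizedHGFun {a, b, c} {d, e} 1

theorem regularizedHGFunCoeff_triple_pair (a b c d e : ℂ) (n : ℕ) :
    regularizedHGFunCoeff {a, b, c} {d, e} n =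
      poch a n * poch b n * poch c n / n ! * (Gamma (d + n))⁻¹ * (Gamma (e + n))⁻¹ := by
  simp only [regularizedHGFunCoeff, poch, Multiset.insert_eq_cons, Multiset.map_cons,
    Multiset.map_singleton, Multiset.prod_cons, Multiset.prod_singleton]
  field_simp

theorem regularizedF32_eq_tsum (a b c d e : ℂ) :
    regularizedF32 a b c d e = ∑' n, regularizedHGFunCoeff {a, b, c} {d, e} n := by
  simp [regularizedF32, regularizedHGFun, FormalMultilinearSeries.sum]

theorem regularizedF32_swap₁₂ (a b c d e : ℂ) :
    regularizedF32 a b c d e = regularizedF32 b a c d e := by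
  simp only [regularizedF32, Multiset.insert_eq_cons, Multiset.cons_swap a b]

theorem regularizedF32_swap₄₅ (a b c d e : ℂ) :
    regularizedF32 a b c d e = regularizedF32 a b c e d := by
  rw [regularizedF32, regularizedF32, Multiset.pair_comm d e]

theorem norm_regularizedHGFunCoeff_le (a b c d e : ℂ) (n : ℕ) :
    ‖regularizedHGFunCoeff {a, b, c} {d, e} n‖ ≤
      growthConst (a - 1) * growthConst (b - 1) * growthConst (c - 1) * growthConst (d - 1) *
        growthConst (e - 1) * (n + 1 : ℝ) ^ (-1 - (d + e - a - b - c).re) := by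
  have hn : (0 : ℝ) < n + 1 := by positivity
  have hexp : -1 - (d + e - a - b - c).re =
      (a.re - 1) + (b.re - 1) + (c.re - 1) + (1 - d.re) + (1 - e.re) := by
    simp only [sub_re, add_re]
    ring
  calc ‖regularizedHGFunCoeff {a, b, c} {d, e} n‖
      = ‖poch a n‖ * ‖poch b n‖ * ‖poch c n‖ / n ! *
          ‖(Gamma (d + n))⁻¹‖ * ‖(Gamma (e + n))⁻¹‖ := by
        simp only [regularizedHGFunCoeff_triple_pair, norm_mul, norm_div, norm_natCast]
    _ ≤ (n ! * (n + 1 : ℝ) ^ (a.re - 1) * growthConst (a - 1)) *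
          (n ! * (n + 1 : ℝ) ^ (b.re - 1) * growthConst (b - 1)) *
          (n ! * (n + 1 : ℝ) ^ (c.re - 1) * growthConst (c - 1)) / n ! *
          ((n + 1 : ℝ) ^ (1 - d.re) / n ! * growthConst (d - 1)) *
          ((n + 1 : ℝ) ^ (1 - e.re) / n ! * growthConst (e - 1)) := by
        have := growthConst_pos (a - 1)
        have := growthConst_pos (b - 1)
        have := growthConst_pos (c - 1)
        have := growthConst_pos (d - 1)
        gcongr
        exacts [norm_poch_le a n, norm_poch_le b n, norm_poch_le c n,
          norm_inv_Gamma_add_natCast_le d n, norm_inv_Gamma_add_natCast_le e n]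
    _ = _ := by
        have : (n ! : ℝ) ≠ 0 := by positivity
        rw [hexp, Real.rpow_add hn, Real.rpow_add hn, Real.rpow_add hn, Real.rpow_add hn]
        field_simp

theorem summable_natCast_add_one_rpow {s : ℝ} (hs : s < -1) :
    Summable fun n : ℕ ↦ (n + 1 : ℝ) ^ s := by
  simpa using (summable_nat_add_iff 1).mpr (Real.summable_nat_rpow.mpr hs)

theorem summable_norm_regularizedHGFunCoeff {a b c d e : ℂ} (h : 0 < (d + e - a - b - c).re) :
    Summable fun n ↦ ‖regularizedHGFunCoeff {a, b, c} {d, e} n‖ :=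
  .of_nonneg_of_le (fun _ ↦ norm_nonneg _) (norm_regularizedHGFunCoeff_le a b c d e)
    ((summable_natCast_add_one_rpow (by linarith)).mul_left _)

theorem analyticAt_inv_Gamma {f : ℂ → ℂ} {z : ℂ} (hf : AnalyticAt ℂ f z) :
    AnalyticAt ℂ (fun z ↦ (Gamma (f z))⁻¹) z :=
  (differentiable_one_div_Gamma.analyticAt (f z)).comp hf

theorem analyticAt_regularizedHGFunCoeff {a b c d e : ℂ → ℂ} {z : ℂ} (ha : AnalyticAt ℂ a z)
    (hb : AnalyticAt ℂ b z) (hc : AnalyticAt ℂ c z) (hd : AnalyticAt ℂ d z)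
    (he : AnalyticAt ℂ e z) (n : ℕ) :
    AnalyticAt ℂ (fun z ↦ regularizedHGFunCoeff {a z, b z, c z} {d z, e z} n) z := by
  have hpoch {f : ℂ → ℂ} (hf : AnalyticAt ℂ f z) : AnalyticAt ℂ (fun z ↦ poch (f z) n) z :=
    ((ascPochhammer ℂ n).differentiable.analyticAt (f z)).comp hf
  have hGamma {f : ℂ → ℂ} (hf : AnalyticAt ℂ f z) :
      AnalyticAt ℂ (fun z ↦ (Gamma (f z + n))⁻¹) z :=
    analyticAt_inv_Gamma (f := fun z ↦ f z + n) (by fun_prop)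
  simp only [regularizedHGFunCoeff_triple_pair]
  exact (((((hpoch ha).mul (hpoch hb)).mul (hpoch hc)).div_const).mul (hGamma hd)).mul (hGamma he)

theorem analyticAt_regularizedF32 {a b c d e : ℂ → ℂ} {z₀ : ℂ} (ha : AnalyticAt ℂ a z₀)
    (hb : AnalyticAt ℂ b z₀) (hc : AnalyticAt ℂ c z₀) (hd : AnalyticAt ℂ d z₀)
    (he : AnalyticAt ℂ e z₀) (h : 0 < (d z₀ + e z₀ - a z₀ - b z₀ - c z₀).re) :
    AnalyticAt ℂ (fun z ↦ regularizedF32 (a z) (b z) (c z) (d z) (e z)) z₀ := by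
  set C : ℂ → ℝ := fun z ↦ growthConst (a z - 1) * growthConst (b z - 1) * growthConst (c z - 1) *
    growthConst (d z - 1) * growthConst (e z - 1)
  set s : ℂ → ℝ := fun z ↦ (d z + e z - a z - b z - c z).re
  have hca := ha.continuousAt
  have hcb := hb.continuousAt
  have hcc := hc.continuousAt
  have hcd := hd.continuousAt
  have hce := he.continuousAt
  have hC : ∀ᶠ z in 𝓝 z₀, C z < C z₀ + 1 :=
    ContinuousAt.eventually_lt (by simp only [C, growthConst]; fun_prop) continuousAt_const
      (lt_add_one _)
  have hs : ∀ᶠ z in 𝓝 z₀, s z₀ / 2 < s z :=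
    ContinuousAt.eventually_lt continuousAt_const (by fun_prop) (half_lt_self h)
  have hcoeff : ∀ᶠ z in 𝓝 z₀, ∀ n,
      AnalyticAt ℂ (fun z ↦ regularizedHGFunCoeff {a z, b z, c z} {d z, e z} n) z := by
    filter_upwards [ha.eventually_analyticAt, hb.eventually_analyticAt, hc.eventually_analyticAt,
      hd.eventually_analyticAt, he.eventually_analyticAt] with z using
      analyticAt_regularizedHGFunCoeff
  obtain ⟨U, hU, hUo, hz₀⟩ := eventually_nhds_iff.mp (hC.and (hs.and hcoeff))
  have hCpos : 0 < C z₀ := by simp only [C, growthConst]; positivity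
  simp only [regularizedF32_eq_tsum]
  refine DifferentiableOn.analyticAt (differentiableOn_tsum_of_summable_norm
    (u := fun n : ℕ ↦ (C z₀ + 1) * (n + 1 : ℝ) ^ (-1 - s z₀ / 2)) ?_ ?_ hUo ?_)
    (hUo.mem_nhds hz₀)
  · exact (summable_natCast_add_one_rpow (by linarith [half_pos h])).mul_left _
  · exact fun n z hz ↦ ((hU z hz).2.2 n).differentiableAt.differentiableWithinAt
  · intro n z hz
    refine (norm_regularizedHGFunCoeff_le _ _ _ _ _ n).trans ?_
    gcongr
    · exact (hU z hz).1.le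
    · linarith [n.cast_nonneg (α := ℝ)]
    · exact (hU z hz).2.1.le

theorem NotPole.Gamma_ne_zero {z : ℂ} (hz : NotPole z) : Gamma z ≠ 0 :=
  Complex.Gamma_ne_zero hz

theorem NotPole.Gamma_add_natCast {z : ℂ} (hz : NotPole z) (n : ℕ) :
    Gamma (z + n) = Gamma z * poch z n := by
  rw [poch, ← Gamma_add_nat_div_Gamma_eq z hz, mul_div_cancel₀ _ hz.Gamma_ne_zero]

theorem F32_eq_Gamma_mul_regularizedF32 {d e : ℂ} (hd : NotPole d) (he : NotPole e)
    (a b c : ℂ) : F32 a b c d e = Gamma d * Gamma e * regularizedF32 a b c d e := by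
  rw [F32, regularizedF32_eq_tsum, ← tsum_mul_left]
  congr 1 with n
  have := hd.Gamma_ne_zero
  have := he.Gamma_ne_zero
  rw [regularizedHGFunCoeff_triple_pair, hd.Gamma_add_natCast, he.Gamma_add_natCast]
  field_simp

theorem integrable_tsum_of_summable_integral_norm {ι α E : Type*} [Countable ι]
    [MeasurableSpace α] {μ : Measure α} [NormedAddCommGroup E] [CompleteSpace E] {f : ι → α → E}
    (hf : ∀ i, Integrable (f i) μ) (hsum : Summable fun i ↦ ∫ a, ‖f i a‖ ∂μ) :
    Integrable (fun a ↦ ∑' i, f i a) μ := by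
  have hfinite : ∑' i, ‖(hf i).toL1 (f i)‖ₑ ≠ ⊤ := by
    simp_rw [← L1.norm_of_fun_eq_integral_norm (hf _)] at hsum
    simpa only [← ofReal_norm] using hsum.tsum_ofReal_ne_top
  refine (L1.integrable_coeFn (∑' i, (hf i).toL1 (f i))).congr ?_
  filter_upwards [Lp.coeFn_tsum hfinite, ae_all_iff.mpr fun i ↦ (hf i).coeFn_toL1]
    with a htsum hterm
  simp only [htsum, hterm]

/-- The weight `t ^ (u - 1) * (1 - t) ^ (v - 1)` of Euler's beta integral `B(u, v)`. -/
noncomputable def betaWeight (u v : ℂ) (t : ℝ) : ℂ := (t : ℂ) ^ (u - 1) * (1 - (t : ℂ)) ^ (v - 1)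

theorem integrableOn_betaWeight {u v : ℂ} (hu : 0 < u.re) (hv : 0 < v.re) :
    IntegrableOn (betaWeight u v) (Ioo 0 1) :=
  (intervalIntegrable_iff_integrableOn_Ioo_of_le zero_le_one).mp (betaIntegral_convergent hu hv)

theorem integral_betaWeight {u v : ℂ} (hu : 0 < u.re) (hv : 0 < v.re) :
    ∫ t in Ioo (0 : ℝ) 1, betaWeight u v t = Gamma u * Gamma v * (Gamma (u + v))⁻¹ := by
  rw [← div_eq_mul_inv, ← betaIntegral_eq_Gamma_mul_div u v hu hv, betaIntegral,
    intervalIntegral.integral_of_le zero_le_one, integral_Ioc_eq_integral_Ioo]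
  rfl

theorem ofReal_norm_betaWeight (u v : ℂ) {t : ℝ} (ht : t ∈ Ioo (0 : ℝ) 1) :
    (‖betaWeight u v t‖ : ℂ) = betaWeight u.re v.re t := by
  have ht₁ : 0 < 1 - t := sub_pos.mpr ht.2
  simp only [betaWeight, ← ofReal_one, ← ofReal_sub, norm_mul, ofReal_mul,
    norm_cpow_eq_rpow_re_of_pos ht.1, norm_cpow_eq_rpow_re_of_pos ht₁, ofReal_cpow ht.1.le,
    ofReal_cpow ht₁.le, sub_re, ofReal_re]

theorem integral_norm_betaWeight {u v : ℂ} (hu : 0 < u.re) (hv : 0 < v.re) :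
    ∫ t in Ioo (0 : ℝ) 1, ‖betaWeight u v t‖ =
      ‖Gamma u.re * Gamma v.re * (Gamma (u.re + v.re))⁻¹‖ := by
  rw [← integral_betaWeight (u := u.re) (v := v.re) hu hv,
    ← setIntegral_congr_fun measurableSet_Ioo fun t ht ↦ ofReal_norm_betaWeight u v ht,
    integral_complex_ofReal, norm_real, Real.norm_of_nonneg (integral_nonneg fun _ ↦ norm_nonneg _)]

theorem betaWeight_mul_pow (u v : ℂ) {t : ℝ} (ht : 0 < t) (n : ℕ) :
    betaWeight u v t * (t : ℂ) ^ n = betaWeight (u + n) v t := by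
  rw [betaWeight, betaWeight, add_sub_right_comm, cpow_add _ _ (ofReal_ne_zero.mpr ht.ne'),
    cpow_natCast]
  ring

theorem regularizedGaussHGFun_eq_tsum (a b d z : ℂ) :
    regularizedGaussHGFun a b d z = ∑' n, regularizedHGFunCoeff {a, b} {d} n * z ^ n := by
  simp [regularizedGaussHGFun, regularizedGaussHGFunSeries, FormalMultilinearSeries.sum, mul_comm]

theorem regularizedHGFunCoeff_pair_singleton (a b d : ℂ) (n : ℕ) :
    regularizedHGFunCoeff {a, b} {d} n = poch a n * poch b n / n ! * (Gamma (d + n))⁻¹ := by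
  simp only [regularizedHGFunCoeff, poch, Multiset.insert_eq_cons, Multiset.map_cons,
    Multiset.map_singleton, Multiset.prod_cons, Multiset.prod_singleton]
  field_simp

theorem regularizedHGFunCoeff_mul_Gamma {c : ℂ} (hc : NotPole c) (a b d v : ℂ) (n : ℕ) :
    regularizedHGFunCoeff {a, b} {d} n * (Gamma (c + n) * Gamma v * (Gamma (c + n + v))⁻¹) =
      Gamma c * Gamma v * regularizedHGFunCoeff {a, b, c} {d, c + v} n := by
  rw [regularizedHGFunCoeff_pair_singleton, regularizedHGFunCoeff_triple_pair,
    hc.Gamma_add_natCast, add_right_comm c]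
  field_simp

section EulerIntegral

variable {a b c d v : ℂ}

theorem summable_integral_norm_coeff_mul_betaWeight (hc : 0 < c.re) (hv : 0 < v.re)
    (h : 0 < (d + v - a - b).re) :
    Summable fun n : ℕ ↦
      ∫ t in Ioo (0 : ℝ) 1, ‖regularizedHGFunCoeff {a, b} {d} n * betaWeight (c + n) v t‖ := by
  have hterm (n : ℕ) :
      ∫ t in Ioo (0 : ℝ) 1, ‖regularizedHGFunCoeff {a, b} {d} n * betaWeight (c + n) v t‖ =
        ‖Gamma c.re * Gamma v.re‖ *
          ‖regularizedHGFunCoeff {a, b, (c.re : ℂ)} {d, (c.re + v.re : ℂ)} n‖ := by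
    have hcn : 0 < (c + n).re := by
      rw [add_re, natCast_re]
      positivity
    have hre : ((c + n).re : ℂ) = c.re + n := by simp
    simp only [norm_mul (regularizedHGFunCoeff {a, b} {d} n)]
    rw [integral_const_mul, integral_norm_betaWeight hcn hv, ← norm_mul, ← norm_mul, hre,
      regularizedHGFunCoeff_mul_Gamma (notPole_of_re_pos (by simpa using hc))]
  simp only [hterm]
  refine (summable_norm_regularizedHGFunCoeff ?_).mul_left _
  simp only [sub_re, add_re, ofReal_re] at h ⊢
  linarith

theorem tsum_coeff_mul_betaWeight {t : ℝ} (ht : 0 < t) :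
    ∑' n : ℕ, regularizedHGFunCoeff {a, b} {d} n * betaWeight (c + n) v t =
      betaWeight c v t * regularizedGaussHGFun a b d t := by
  simp only [regularizedGaussHGFun_eq_tsum, ← tsum_mul_left, ← betaWeight_mul_pow c v ht]
  congr 1 with n
  ring

theorem integrable_coeff_mul_betaWeight (hc : 0 < c.re) (hv : 0 < v.re) (n : ℕ) :
    IntegrableOn (fun t ↦ regularizedHGFunCoeff {a, b} {d} n * betaWeight (c + n) v t)
      (Ioo 0 1) :=
  (integrableOn_betaWeight (by rw [add_re, natCast_re]; positivity) hv).const_mul _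

theorem integrableOn_betaWeight_mul_regularizedGaussHGFun (hc : 0 < c.re) (hv : 0 < v.re)
    (h : 0 < (d + v - a - b).re) :
    IntegrableOn (fun t ↦ betaWeight c v t * regularizedGaussHGFun a b d t) (Ioo 0 1) :=
  IntegrableOn.congr_fun (integrable_tsum_of_summable_integral_norm
    (integrable_coeff_mul_betaWeight hc hv) (summable_integral_norm_coeff_mul_betaWeight hc hv h))
    (fun _ ht ↦ tsum_coeff_mul_betaWeight ht.1) measurableSet_Ioo

theorem integral_betaWeight_mul_regularizedGaussHGFun (hc : 0 < c.re) (hv : 0 < v.re)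
    (h : 0 < (d + v - a - b).re) :
    ∫ t in Ioo (0 : ℝ) 1, betaWeight c v t * regularizedGaussHGFun a b d t =
      Gamma c * Gamma v * regularizedF32 a b c d (c + v) := by
  rw [← setIntegral_congr_fun measurableSet_Ioo fun t ht ↦ tsum_coeff_mul_betaWeight ht.1,
    ← integral_tsum_of_summable_integral_norm (integrable_coeff_mul_betaWeight hc hv)
      (summable_integral_norm_coeff_mul_betaWeight hc hv h), regularizedF32_eq_tsum,
    ← tsum_mul_left]
  congr 1 with n
  have hcn : 0 < (c + n).re := by
    rw [add_re, natCast_re]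
    positivity
  rw [integral_const_mul, integral_betaWeight hcn hv,
    regularizedHGFunCoeff_mul_Gamma (notPole_of_re_pos hc)]

end EulerIntegral

theorem poch_eq_factorial_mul_choose (a : ℂ) (n : ℕ) :
    poch a n = n ! * Ring.choose (a + n - 1) n := by
  rw [← nsmul_eq_mul, ← Ring.descPochhammer_eq_factorial_smul_choose,
    Polynomial.descPochhammer_smeval_eq_ascPochhammer, Polynomial.ascPochhammer_smeval_cast,
    Polynomial.ascPochhammer_smeval_eq_eval, poch]
  congr 1
  ring

theorem regularizedGaussHGFun_self {x : ℂ} (hx : NotPole x) (a : ℂ) {t : ℝ}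
    (ht : t ∈ Ioo (0 : ℝ) 1) :
    regularizedGaussHGFun x a x t = (Gamma x)⁻¹ * (1 - (t : ℂ)) ^ (-a) := by
  have hseries := (one_div_one_sub_cpow_hasFPowerSeriesOnBall_zero a).hasSum (y := (t : ℂ)) (by
    rw [Metric.mem_eball, edist_zero_right, ← ofReal_norm, norm_real, Real.norm_of_nonneg ht.1.le]
    simpa using ht.2)
  simp only [zero_add] at hseries
  rw [cpow_neg, ← one_div ((1 - (t : ℂ)) ^ a), ← hseries.tsum_eq, regularizedGaussHGFun_eq_tsum,
    ← tsum_mul_left]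
  congr 1 with n
  have hfact : (n ! : ℂ) ≠ 0 := by exact_mod_cast n.factorial_ne_zero
  have := poch_ne_zero hx n
  have := hx.Gamma_ne_zero
  rw [FormalMultilinearSeries.apply_eq_pow_smul_coeff, FormalMultilinearSeries.coeff_ofScalars,
    regularizedHGFunCoeff_pair_singleton, hx.Gamma_add_natCast, poch_eq_factorial_mul_choose a,
    smul_eq_mul]
  field_simp

/-- Gauss's summation theorem: the common parameter `x` cancels and leaves `₂F₁(a, c; d; 1)`. -/
theorem regularizedF32_gauss {x : ℂ} (hx : NotPole x) {a c d : ℂ} (hc : 0 < c.re)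
    (hdc : 0 < (d - c).re) (h : 0 < (d - a - c).re) :
    regularizedF32 x a c x d =
      Gamma (d - a - c) * (Gamma x)⁻¹ * (Gamma (d - a))⁻¹ * (Gamma (d - c))⁻¹ := by
  have hEuler := integral_betaWeight_mul_regularizedGaussHGFun (a := x) (b := a) (d := x) hc hdc
    (by convert h using 2; ring)
  have hweight : ∀ t ∈ Ioo (0 : ℝ) 1, betaWeight c (d - c) t * regularizedGaussHGFun x a x t =
      (Gamma x)⁻¹ * betaWeight c (d - a - c) t := by
    intro t ht
    have : 1 - (t : ℂ) ≠ 0 := by exact_mod_cast (sub_pos.mpr ht.2).ne'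
    rw [regularizedGaussHGFun_self hx a ht, betaWeight, betaWeight,
      show d - a - c - 1 = (d - c - 1) + -a by ring, cpow_add _ _ this]
    ring
  rw [setIntegral_congr_fun measurableSet_Ioo hweight, integral_const_mul,
    integral_betaWeight hc h, add_sub_cancel, add_sub_cancel] at hEuler
  have := Gamma_ne_zero_of_re_pos hc
  have := Gamma_ne_zero_of_re_pos hdc
  refine mul_left_cancel₀ (mul_ne_zero ‹Gamma c ≠ 0› ‹Gamma (d - c) ≠ 0›) ?_
  rw [← hEuler]
  field_simp

section Reflection

variable {f : ℝ → ℂ}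

theorem integrableOn_Ioo_comp_one_sub (hf : IntegrableOn f (Ioo 0 1)) :
    IntegrableOn (fun t ↦ f (1 - t)) (Ioo 0 1) := by
  rw [← intervalIntegrable_iff_integrableOn_Ioo_of_le zero_le_one] at hf ⊢
  simpa using (hf.comp_sub_left 1).symm

theorem setIntegral_Ioo_comp_one_sub :
    ∫ t in Ioo (0 : ℝ) 1, f (1 - t) = ∫ t in Ioo (0 : ℝ) 1, f t := by
  simp only [← integral_Ioc_eq_integral_Ioo, ← intervalIntegral.integral_of_le zero_le_one]
  simp

end Reflection

theorem betaWeight_one_sub (u v : ℂ) (t : ℝ) : betaWeight u v (1 - t) = betaWeight v u t := by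
  rw [betaWeight, betaWeight, ofReal_sub, ofReal_one, sub_sub_cancel, mul_comm]

theorem betaWeight_mul_one_sub_cpow (u v s : ℂ) {t : ℝ} (ht : t < 1) :
    betaWeight u v t * (1 - (t : ℂ)) ^ s = betaWeight u (v + s) t := by
  have : 1 - (t : ℂ) ≠ 0 := by exact_mod_cast (sub_pos.mpr ht).ne'
  rw [betaWeight, betaWeight, mul_assoc, ← cpow_add _ _ this, add_sub_right_comm]

section ReflectedEulerIntegral

variable {a b c d v : ℂ}

theorem integrableOn_betaWeight_mul_regularizedGaussHGFun_one_sub (hc : 0 < c.re) (hv : 0 < v.re)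
    (h : 0 < (d + c - a - b).re) :
    IntegrableOn (fun t ↦ betaWeight c v t * regularizedGaussHGFun a b d (1 - t)) (Ioo 0 1) := by
  simpa [betaWeight_one_sub] using integrableOn_Ioo_comp_one_sub
    (integrableOn_betaWeight_mul_regularizedGaussHGFun hv hc h)

theorem integral_betaWeight_mul_regularizedGaussHGFun_one_sub (hc : 0 < c.re) (hv : 0 < v.re)
    (h : 0 < (d + c - a - b).re) :
    ∫ t in Ioo (0 : ℝ) 1, betaWeight c v t * regularizedGaussHGFun a b d (1 - t) =
      Gamma c * Gamma v * regularizedF32 a b v d (c + v) := by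
  rw [mul_comm (Gamma c), add_comm c, ← integral_betaWeight_mul_regularizedGaussHGFun hv hc h,
    ← setIntegral_Ioo_comp_one_sub]
  simp [betaWeight_one_sub]

end ReflectedEulerIntegral

/-- The difference of the two sides of the connection formula between the solutions of the
hypergeometric equation at `0` and at `1`, each `₂F₁(a, b; d; ·)` being divided by `Γ(d)`. -/
noncomputable def connectionDefect (a b d : ℂ) (t : ℝ) : ℂ :=
  sin (π * (d - a - b)) / π * regularizedGaussHGFun a b d t -
    (Gamma (d - a))⁻¹ * (Gamma (d - b))⁻¹ * regularizedGaussHGFun a b (a + b - d + 1) (1 - t) +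
    (Gamma a)⁻¹ * (Gamma b)⁻¹ * ((1 - (t : ℂ)) ^ (d - a - b) *
      regularizedGaussHGFun (d - a) (d - b) (d - a - b + 1) (1 - t))

/-- The difference of the two sides of the three-term relation, with every series regularised:
up to a factor, the beta-weighted integral of `connectionDefect`. -/
noncomputable def threeTermDefect (a b c d e : ℂ) : ℂ :=
  sin (π * (d - a - b)) / π * regularizedF32 a b c d e -
    (Gamma (d - a))⁻¹ * (Gamma (d - b))⁻¹ * regularizedF32 a b (e - c) (a + b - d + 1) e +
    (Gamma a)⁻¹ * (Gamma b)⁻¹ * (Gamma (e - c))⁻¹ * Gamma (d + e - a - b - c) *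
      regularizedF32 (d - a) (d - b) (d + e - a - b - c) (d - a - b + 1) (d + e - a - b)

section IntegratedConnectionFormula

variable {a b c d e : ℂ}

theorem betaWeight_mul_connectionDefect {t : ℝ} (ht : t < 1) :
    betaWeight c (e - c) t * connectionDefect a b d t =
      sin (π * (d - a - b)) / π * (betaWeight c (e - c) t * regularizedGaussHGFun a b d t) -
      (Gamma (d - a))⁻¹ * (Gamma (d - b))⁻¹ *
        (betaWeight c (e - c) t * regularizedGaussHGFun a b (a + b - d + 1) (1 - t)) +
      (Gamma a)⁻¹ * (Gamma b)⁻¹ * (betaWeight c (d + e - a - b - c) t *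
        regularizedGaussHGFun (d - a) (d - b) (d - a - b + 1) (1 - t)) := by
  rw [show d + e - a - b - c = (e - c) + (d - a - b) by ring,
    ← betaWeight_mul_one_sub_cpow c (e - c) (d - a - b) ht, connectionDefect]
  ring

theorem integrableOn_and_integral_betaWeight_mul_connectionDefect (hc : 0 < c.re)
    (hec : 0 < (e - c).re) (hs : 0 < (d + e - a - b - c).re) (hcd : 0 < (c - d + 1).re) :
    IntegrableOn (fun t ↦ betaWeight c (e - c) t * connectionDefect a b d t) (Ioo 0 1) ∧
    ∫ t in Ioo (0 : ℝ) 1, betaWeight c (e - c) t * connectionDefect a b d t =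
      Gamma c * Gamma (e - c) * threeTermDefect a b c d e := by
  have hs₁ : 0 < (d + (e - c) - a - b).re := by convert hs using 2; ring
  have hs₂ : 0 < (a + b - d + 1 + c - a - b).re := by convert hcd using 2; ring
  have hs₃ : 0 < (d - a - b + 1 + c - (d - a) - (d - b)).re := by convert hcd using 2; ring
  have hint₁ := (integrableOn_betaWeight_mul_regularizedGaussHGFun hc hec hs₁).const_mul
    (sin (π * (d - a - b)) / π)
  have hint₂ := (integrableOn_betaWeight_mul_regularizedGaussHGFun_one_sub hc hec hs₂).const_mul
    ((Gamma (d - a))⁻¹ * (Gamma (d - b))⁻¹)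
  have hint₃ := (integrableOn_betaWeight_mul_regularizedGaussHGFun_one_sub hc hs hs₃).const_mul
    ((Gamma a)⁻¹ * (Gamma b)⁻¹)
  refine ⟨IntegrableOn.congr_fun ((hint₁.sub hint₂).add hint₃)
    (fun t ht ↦ (betaWeight_mul_connectionDefect ht.2).symm) measurableSet_Ioo, ?_⟩
  have := Gamma_ne_zero_of_re_pos hec
  calc ∫ t in Ioo (0 : ℝ) 1, betaWeight c (e - c) t * connectionDefect a b d t
      = _ := setIntegral_congr_fun measurableSet_Ioo
          fun t ht ↦ betaWeight_mul_connectionDefect ht.2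
    _ = _ := integral_add (hint₁.sub hint₂) hint₃
    _ = Gamma c * Gamma (e - c) * threeTermDefect a b c d e := by
      rw [integral_sub hint₁ hint₂, integral_const_mul, integral_const_mul, integral_const_mul,
        integral_betaWeight_mul_regularizedGaussHGFun hc hec hs₁,
        integral_betaWeight_mul_regularizedGaussHGFun_one_sub hc hec hs₂,
        integral_betaWeight_mul_regularizedGaussHGFun_one_sub hc hs hs₃, add_sub_cancel,
        show c + (d + e - a - b - c) = d + e - a - b by ring, threeTermDefect]
      field_simp

end IntegratedConnectionFormula

theorem Gamma_inv_mul_Gamma_one_sub_inv (z : ℂ) :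
    (Gamma z)⁻¹ * (Gamma (1 - z))⁻¹ = sin (π * z) / π := by
  rw [← mul_inv, Gamma_mul_Gamma_one_sub, inv_div]

theorem NotPole.Gamma_one_sub_inv {z : ℂ} (hz : NotPole z) :
    (Gamma (1 - z))⁻¹ = sin (π * z) / π * Gamma z := by
  rw [← Gamma_inv_mul_Gamma_one_sub_inv, mul_right_comm, inv_mul_cancel₀ hz.Gamma_ne_zero, one_mul]

theorem sin_mul_sin_three_term (a b c d : ℂ) :
    sin (d - a - b) * sin (d - c) - sin (d - a) * sin (d - b - c) + sin b * sin (a - c) = 0 := by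
  have sin_mul_sin (u v : ℂ) : sin u * sin v = (cos (u - v) - cos (u + v)) / 2 := by
    rw [cos_sub, cos_add]
    ring
  rw [sin_mul_sin, sin_mul_sin, sin_mul_sin,
    show d - a - b - (d - c) = -(a + b - c) by ring,
    show d - a - (d - b - c) = -(a - b - c) by ring, show b - (a - c) = -(a - b - c) by ring,
    show d - a - b + (d - c) = d - a + (d - b - c) by ring,
    show b + (a - c) = a + b - c by ring, cos_neg, cos_neg]
  ring

theorem threeTermDefect_self_eq_zero {a b c d : ℂ} (hc : 0 < c.re) (ha : a.re ∈ Ioo c.re (c.re + 1))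
    (hd : d.re ∈ Ioo c.re (c.re + 1)) (hdb : (d - b).re ∈ Ioo c.re (c.re + 1)) :
    threeTermDefect a b c d a = 0 := by
  obtain ⟨ha₀, ha₁⟩ := ha
  obtain ⟨hd₀, hd₁⟩ := hd
  obtain ⟨hb₀, hb₁⟩ := hdb
  have hR₁ : regularizedF32 a b c d a =
      Gamma (d - b - c) * (Gamma a)⁻¹ * (Gamma (d - b))⁻¹ * (Gamma (d - c))⁻¹ := by
    rw [regularizedF32_swap₄₅]
    apply regularizedF32_gauss (notPole_of_re_pos (hc.trans ha₀)) hc <;>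
      simp only [sub_re] at * <;> linarith
  have hR₂ : regularizedF32 a b (a - c) (a + b - d + 1) a =
      Gamma (1 - (d - c)) * (Gamma a)⁻¹ * (Gamma (1 - (d - a)))⁻¹ *
        (Gamma (1 - (d - b - c)))⁻¹ := by
    rw [regularizedF32_swap₄₅, regularizedF32_gauss (notPole_of_re_pos (hc.trans ha₀))]
    · ring_nf
    all_goals simp only [sub_re, add_re, one_re] at *; linarith
  have hR₃ : regularizedF32 (d - a) (d - b) (d - b - c) (d - a - b + 1) (d - b) =
      Gamma (1 - (d - c)) * (Gamma (d - b))⁻¹ * (Gamma (1 - b))⁻¹ * (Gamma (1 - (a - c)))⁻¹ := by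
    rw [regularizedF32_swap₁₂, regularizedF32_swap₄₅,
      regularizedF32_gauss (notPole_of_re_pos (hc.trans hb₀))]
    · ring_nf
    all_goals simp only [sub_re, add_re, one_re] at *; linarith
  have hdc : (Gamma (d - c))⁻¹ = sin (π * (d - c)) / π * Gamma (1 - (d - c)) := by
    rw [← Gamma_inv_mul_Gamma_one_sub_inv, mul_assoc, inv_mul_cancel₀, mul_one]
    exact Gamma_ne_zero_of_re_pos (by simp only [sub_re, one_re]; linarith)
  have hdbc : (Gamma (1 - (d - b - c)))⁻¹ = sin (π * (d - b - c)) / π * Gamma (d - b - c) :=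
    (notPole_of_re_pos (by simpa using hb₀)).Gamma_one_sub_inv
  rw [threeTermDefect, show d + a - a - b - c = d - b - c by ring,
    show d + a - a - b = d - b by ring, hR₁, hR₂, hR₃, hdc, hdbc]
  have hsin := sin_mul_sin_three_term (π * a) (π * b) (π * c) (π * d)
  simp only [← mul_sub] at hsin
  linear_combination (Gamma (d - b - c) * Gamma (1 - (d - c)) * (Gamma a)⁻¹ * (Gamma (d - b))⁻¹) *
    (-sin (π * (d - b - c)) / π * Gamma_inv_mul_Gamma_one_sub_inv (d - a) +
      (Gamma (a - c))⁻¹ * (Gamma (1 - (a - c)))⁻¹ * Gamma_inv_mul_Gamma_one_sub_inv b +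
      sin (π * b) / π * Gamma_inv_mul_Gamma_one_sub_inv (a - c) +
      hsin / π ^ 2)

theorem eq_zero_of_mellin_eq_zero {E : Type*} [NormedAddCommGroup E] [NormedSpace ℂ E]
    [CompleteSpace E] {f : ℝ → E} {σ : ℝ} (hf : MellinConvergent f σ)
    (hzero : ∀ s : ℂ, s.re = σ → mellin f s = 0) {x : ℝ} (hx : 0 < x) (hfx : ContinuousAt f x) :
    f x = 0 := by
  have hline (y : ℝ) : mellin f (σ + y * I) = 0 := hzero _ (by simp)
  have hint : VerticalIntegrable (mellin f) σ := by simp [VerticalIntegrable, hline]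
  rw [← mellinInv_mellin_eq σ f hx hf hint hfx]
  simp [mellinInv, hline]

section UnitIntervalSubstitution

theorem div_one_sub_div_one_add_div_one_sub {t : ℝ} (ht : t < 1) :
    t / (1 - t) / (1 + t / (1 - t)) = t := by
  have : 1 - t ≠ 0 := (sub_pos.mpr ht).ne'
  field_simp
  ring

theorem injOn_div_one_sub : InjOn (fun t : ℝ ↦ t / (1 - t)) (Ioo 0 1) :=
  LeftInvOn.injOn (f₁' := fun w ↦ w / (1 + w)) fun _ ht ↦
    div_one_sub_div_one_add_div_one_sub ht.2

theorem image_div_one_sub_Ioo : (fun t : ℝ ↦ t / (1 - t)) '' Ioo 0 1 = Ioi 0 := by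
  apply Subset.antisymm
  · rintro _ ⟨t, ht, rfl⟩
    exact div_pos ht.1 (sub_pos.mpr ht.2)
  · intro w (hw : 0 < w)
    refine ⟨w / (1 + w), ⟨by positivity, (div_lt_one (by positivity)).mpr (by linarith)⟩, ?_⟩
    have : 1 + w ≠ 0 := by positivity
    simp only
    field_simp
    simp

theorem hasDerivAt_div_one_sub {t : ℝ} (ht : t < 1) :
    HasDerivAt (fun t : ℝ ↦ t / (1 - t)) (1 / (1 - t) ^ 2) t := by
  convert! (hasDerivAt_id t).div ((hasDerivAt_id t).const_sub 1) (sub_pos.mpr ht).ne' using 1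
  simp

variable {E : Type*} [NormedAddCommGroup E] [NormedSpace ℂ E] (f : ℝ → E) (s : ℂ)

theorem mellinConvergent_iff_integrableOn_Ioo : MellinConvergent f s ↔
    IntegrableOn (fun t : ℝ ↦ |1 / (1 - t) ^ 2| •
      (((t / (1 - t) : ℝ) : ℂ) ^ (s - 1) • f (t / (1 - t)))) (Ioo 0 1) := by
  rw [MellinConvergent, ← image_div_one_sub_Ioo, integrableOn_image_iff_integrableOn_abs_deriv_smul
    measurableSet_Ioo (fun t ht ↦ (hasDerivAt_div_one_sub ht.2).hasDerivWithinAt) injOn_div_one_sub]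

theorem mellin_eq_setIntegral_Ioo : mellin f s = ∫ t in Ioo (0 : ℝ) 1, |1 / (1 - t) ^ 2| •
    (((t / (1 - t) : ℝ) : ℂ) ^ (s - 1) • f (t / (1 - t))) := by
  rw [mellin, ← image_div_one_sub_Ioo, integral_image_eq_integral_abs_deriv_smul
    measurableSet_Ioo (fun t ht ↦ (hasDerivAt_div_one_sub ht.2).hasDerivWithinAt) injOn_div_one_sub]

end UnitIntervalSubstitution

theorem betaWeight_eq_substitution (a c : ℂ) {t : ℝ} (ht : t ∈ Ioo (0 : ℝ) 1) :
    ((|1 / (1 - t) ^ 2| : ℝ) : ℂ) * (((t / (1 - t) : ℝ) : ℂ) ^ (c - 1) *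
      ((1 + t / (1 - t) : ℝ) : ℂ) ^ (-a)) = betaWeight c (a - c) t := by
  have hpos : 0 < 1 - t := sub_pos.mpr ht.2
  have hne : 1 - (t : ℂ) ≠ 0 := by exact_mod_cast hpos.ne'
  have harg : arg (1 - (t : ℂ)) ≠ π := by
    rw [← ofReal_one, ← ofReal_sub, arg_ofReal_of_nonneg hpos.le]
    exact Real.pi_ne_zero.symm
  have hsum : 1 + t / (1 - t) = (1 - t)⁻¹ := by
    field_simp
    ring
  have hderiv : ((|1 / (1 - t) ^ 2| : ℝ) : ℂ) = (1 - (t : ℂ)) ^ (-2 : ℂ) := by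
    rw [abs_of_nonneg (by positivity), cpow_neg]
    norm_cast
    simp
  have hquot : ((t / (1 - t) : ℝ) : ℂ) ^ (c - 1) =
      (t : ℂ) ^ (c - 1) * (1 - (t : ℂ)) ^ (-(c - 1)) := by
    rw [div_eq_mul_inv, ofReal_mul, mul_cpow_ofReal_nonneg ht.1.le (inv_nonneg.mpr hpos.le)]
    push_cast
    rw [inv_cpow _ _ harg, cpow_neg]
  rw [hsum, hderiv, hquot, betaWeight, show a - c - 1 = -2 + -(c - 1) + a by ring,
    cpow_add _ _ hne, cpow_add _ _ hne, ofReal_inv, ofReal_sub, ofReal_one, inv_cpow _ _ harg,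
    cpow_neg _ a, inv_inv]
  ring

/-- Uniqueness of the Mellin transform, transported to the unit interval by `w = t / (1 - t)`. -/
theorem eq_zero_of_integral_betaWeight_mul_eq_zero {g : ℝ → ℂ} (hg : ContinuousOn g (Ioo 0 1))
    (a : ℂ) {σ : ℝ} (hint : IntegrableOn (fun t ↦ betaWeight σ (a - σ) t * g t) (Ioo 0 1))
    (hzero : ∀ c : ℂ, c.re = σ → ∫ t in Ioo (0 : ℝ) 1, betaWeight c (a - c) t * g t = 0)
    {t : ℝ} (ht : t ∈ Ioo (0 : ℝ) 1) : g t = 0 := by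
  let f (w : ℝ) : ℂ := ((1 + w : ℝ) : ℂ) ^ (-a) * g (w / (1 + w))
  have hpull (c : ℂ) : EqOn (fun t : ℝ ↦ |1 / (1 - t) ^ 2| •
      (((t / (1 - t) : ℝ) : ℂ) ^ (c - 1) • f (t / (1 - t))))
      (fun t ↦ betaWeight c (a - c) t * g t) (Ioo 0 1) := by
    intro t ht
    simp only [f, div_one_sub_div_one_add_div_one_sub ht.2, real_smul, smul_eq_mul,
      ← betaWeight_eq_substitution a c ht, mul_assoc]
  have hconv : MellinConvergent f σ := by
    rwa [mellinConvergent_iff_integrableOn_Ioo, integrableOn_congr_fun (hpull σ) measurableSet_Ioo]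
  have hmellin (c : ℂ) (hc : c.re = σ) : mellin f c = 0 := by
    rw [mellin_eq_setIntegral_Ioo, setIntegral_congr_fun measurableSet_Ioo (hpull c), hzero c hc]
  have hw : 0 < t / (1 - t) := div_pos ht.1 (sub_pos.mpr ht.2)
  have hcont : ContinuousAt f (t / (1 - t)) := by
    have hgt : ContinuousAt g (t / (1 - t) / (1 + t / (1 - t))) := by
      rw [div_one_sub_div_one_add_div_one_sub ht.2]
      exact hg.continuousAt (isOpen_Ioo.mem_nhds ht)
    refine .mul (.cpow (by fun_prop) (by fun_prop) (ofReal_mem_slitPlane.mpr (by positivity))) ?_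
    exact ContinuousAt.comp (f := fun w : ℝ ↦ w / (1 + w)) hgt
      (.div (by fun_prop) (by fun_prop) (by positivity))
  have hfzero := eq_zero_of_mellin_eq_zero hconv hmellin hw hcont
  simp only [f, div_one_sub_div_one_add_div_one_sub ht.2, mul_eq_zero] at hfzero
  refine hfzero.resolve_left fun h ↦ ?_
  have := (cpow_eq_zero_iff _ _).mp h
  norm_cast at this
  linarith [this.1]

theorem continuousOn_regularizedGaussHGFun (a b d : ℂ) :
    ContinuousOn (regularizedGaussHGFun a b d) (Metric.ball 0 1) := by
  have hradius := radius_regularizedGaussHGFunSeries_ge_one a b d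
  refine ((regularizedGaussHGFunSeries a b d).hasFPowerSeriesOnBall
    (one_pos.trans_le hradius)).continuousOn.mono ?_
  simpa [← Metric.eball_ofReal] using Metric.eball_subset_eball hradius

theorem continuousOn_connectionDefect (a b d : ℂ) :
    ContinuousOn (connectionDefect a b d) (Ioo 0 1) := by
  have hleft : MapsTo (fun t : ℝ ↦ (t : ℂ)) (Ioo 0 1) (Metric.ball 0 1) := fun t ht ↦ by
    simpa [abs_of_pos ht.1] using ht.2
  have hright : MapsTo (fun t : ℝ ↦ 1 - (t : ℂ)) (Ioo 0 1) (Metric.ball 0 1) := fun t ht ↦ by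
    simpa [← ofReal_one, ← ofReal_sub, abs_of_pos (sub_pos.mpr ht.2)] using ht.1
  have hpow : ContinuousOn (fun t : ℝ ↦ (1 - (t : ℂ)) ^ (d - a - b)) (Ioo 0 1) :=
    .cpow (by fun_prop) (by fun_prop) fun t ht ↦ by
      rw [← ofReal_one, ← ofReal_sub]
      exact ofReal_mem_slitPlane.mpr (sub_pos.mpr ht.2)
  have h₁ := (continuousOn_regularizedGaussHGFun a b d).comp (by fun_prop) hleft
  have h₂ := (continuousOn_regularizedGaussHGFun a b (a + b - d + 1)).comp (by fun_prop) hright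
  have h₃ := (continuousOn_regularizedGaussHGFun (d - a) (d - b) (d - a - b + 1)).comp
    (by fun_prop) hright
  exact ((h₁.const_mul _).sub (h₂.const_mul _)).add ((hpow.mul h₃).const_mul _)

/-- For `e = a` all three Euler integrals are evaluated by Gauss's theorem, so the Mellin transform
of the defect vanishes on the line `Re c = σ`. -/
theorem connectionDefect_eq_zero {a b d : ℂ} {σ : ℝ} (hσ : 0 < σ) (ha : a.re ∈ Ioo σ (σ + 1))
    (hd : d.re ∈ Ioo σ (σ + 1)) (hdb : (d - b).re ∈ Ioo σ (σ + 1)) {t : ℝ}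
    (ht : t ∈ Ioo (0 : ℝ) 1) : connectionDefect a b d t = 0 := by
  have hline (c : ℂ) (hc : c.re = σ) :
      IntegrableOn (fun t ↦ betaWeight c (a - c) t * connectionDefect a b d t) (Ioo 0 1) ∧
      ∫ t in Ioo (0 : ℝ) 1, betaWeight c (a - c) t * connectionDefect a b d t = 0 := by
    subst hc
    obtain ⟨hint, hval⟩ := integrableOn_and_integral_betaWeight_mul_connectionDefect (a := a)
      (b := b) (d := d) (e := a) hσ (by simpa using ha.1)
      (by simpa using hdb.1) (by simp only [add_re, sub_re, one_re]; linarith [hd.2])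
    exact ⟨hint, by rw [hval, threeTermDefect_self_eq_zero hσ ha hd hdb, mul_zero]⟩
  exact eq_zero_of_integral_betaWeight_mul_eq_zero (continuousOn_connectionDefect a b d) a
    (hline σ (ofReal_re σ)).1 (fun c hc ↦ (hline c hc).2) ht

theorem threeTermDefect_eq_zero_of_re_mem_Ioo {a b c d e : ℂ} {σ : ℝ} (hσ : 0 < σ)
    (ha : a.re ∈ Ioo σ (σ + 1)) (hd : d.re ∈ Ioo σ (σ + 1)) (hdb : (d - b).re ∈ Ioo σ (σ + 1))
    (hc : 0 < c.re) (hec : 0 < (e - c).re) (hs : 0 < (d + e - a - b - c).re)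
    (hcd : 0 < (c - d + 1).re) : threeTermDefect a b c d e = 0 := by
  have hint := (integrableOn_and_integral_betaWeight_mul_connectionDefect hc hec hs hcd).2
  have hzero : ∀ t ∈ Ioo (0 : ℝ) 1, betaWeight c (e - c) t * connectionDefect a b d t = 0 :=
    fun t ht ↦ by rw [connectionDefect_eq_zero hσ ha hd hdb ht, mul_zero]
  rw [setIntegral_congr_fun measurableSet_Ioo hzero, integral_zero, eq_comm] at hint
  simpa [Gamma_ne_zero_of_re_pos hc, Gamma_ne_zero_of_re_pos hec] using hint

theorem eqOn_zero_of_analyticAt_lines {E F : Type*} [NormedAddCommGroup E] [NormedSpace ℂ E]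
    [NormedAddCommGroup F] [NormedSpace ℂ F] {Ω : Set E} (hconv : Convex ℝ Ω) {f : E → F}
    (hf : ∀ (p q : E) (z : ℂ), p + z • q ∈ Ω → AnalyticAt ℂ (fun z : ℂ ↦ f (p + z • q)) z)
    {p₀ : E} (hp₀ : p₀ ∈ Ω) (hzero : f =ᶠ[𝓝 p₀] 0) : EqOn f 0 Ω := by
  intro p hp
  let line (z : ℂ) : E := p + z • (p₀ - p)
  have hline₁ : line 1 = p₀ := by simp [line]
  have hconvLine : Convex ℝ (line ⁻¹' Ω) := (hconv.translate_preimage_right p).linear_preimage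
    ((LinearMap.toSpanSingleton ℂ E (p₀ - p)).restrictScalars ℝ)
  have htendsto : Tendsto line (𝓝 1) (𝓝 p₀) :=
    hline₁ ▸ (by fun_prop : Continuous line).tendsto 1
  have hline := AnalyticOnNhd.eqOn_zero_of_preconnected_of_eventuallyEq_zero (f := f ∘ line)
    (fun z hz ↦ hf p (p₀ - p) z hz) hconvLine.isPreconnected
    (show line 1 ∈ Ω from hline₁ ▸ hp₀) (htendsto.eventually hzero)
  simpa [line] using hline (show line 0 ∈ Ω by simpa [line] using hp)

theorem analyticAt_threeTermDefect {a b c d e : ℂ → ℂ} {z : ℂ} (ha : AnalyticAt ℂ a z)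
    (hb : AnalyticAt ℂ b z) (hc : AnalyticAt ℂ c z) (hd : AnalyticAt ℂ d z)
    (he : AnalyticAt ℂ e z) (hs : 0 < (d z + e z - a z - b z - c z).re)
    (hcd : 0 < (c z - d z + 1).re) :
    AnalyticAt ℂ (fun z ↦ threeTermDefect (a z) (b z) (c z) (d z) (e z)) z := by
  have hGamma : AnalyticAt ℂ (fun z ↦ Gamma (d z + e z - a z - b z - c z)) z := by
    have := (analyticAt_inv_Gamma (f := fun z ↦ d z + e z - a z - b z - c z) (by fun_prop)).fun_inv
      (inv_ne_zero (Gamma_ne_zero_of_re_pos hs))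
    simpa only [inv_inv] using this
  have hsin : AnalyticAt ℂ (fun z ↦ sin (π * (d z - a z - b z)) / π) z := by fun_prop
  have hR₁ := analyticAt_regularizedF32 ha hb hc hd he hs
  have hR₂ := analyticAt_regularizedF32 ha hb (c := fun z ↦ e z - c z)
    (d := fun z ↦ a z + b z - d z + 1) (by fun_prop) (by fun_prop) he (by convert hcd using 2; ring)
  have hR₃ := analyticAt_regularizedF32 (a := fun z ↦ d z - a z) (b := fun z ↦ d z - b z)
    (c := fun z ↦ d z + e z - a z - b z - c z) (d := fun z ↦ d z - a z - b z + 1)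
    (e := fun z ↦ d z + e z - a z - b z) (by fun_prop) (by fun_prop) (by fun_prop) (by fun_prop)
    (by fun_prop) (by convert hcd using 2; ring)
  have hcoeff₂ := (analyticAt_inv_Gamma (hd.sub ha)).mul (analyticAt_inv_Gamma (hd.sub hb))
  have hcoeff₃ := (((analyticAt_inv_Gamma ha).mul (analyticAt_inv_Gamma hb)).mul
    (analyticAt_inv_Gamma (he.sub hc))).mul hGamma
  exact ((hsin.mul hR₁).sub (hcoeff₂.mul hR₂)).add (hcoeff₃.mul hR₃)

/-- The parameters `(a, b, c, d, e)` for which all three series of the three-term relation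
converge. -/
def convergenceDomain : Set (Fin 5 → ℂ) :=
  {v | 0 < (v 3 + v 4 - v 0 - v 1 - v 2).re ∧ 0 < (v 2 - v 3 + 1).re}

theorem convex_convergenceDomain : Convex ℝ convergenceDomain := by
  have h₁ : IsLinearMap ℝ fun v : Fin 5 → ℂ ↦ (v 3 + v 4 - v 0 - v 1 - v 2).re :=
    ⟨fun v w ↦ by simp only [Pi.add_apply, sub_re, add_re]; ring,
      fun r v ↦ by simp only [Pi.smul_apply, real_smul, sub_re, add_re, re_ofReal_mul]; ring⟩
  have h₂ : IsLinearMap ℝ fun v : Fin 5 → ℂ ↦ (v 2 - v 3).re :=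
    ⟨fun v w ↦ by simp only [Pi.add_apply, sub_re, add_re]; ring,
      fun r v ↦ by simp only [Pi.smul_apply, real_smul, sub_re, re_ofReal_mul]; ring⟩
  convert! (convex_halfSpace_gt h₁ 0).inter (convex_halfSpace_gt h₂ (-1)) using 1
  ext v
  simp only [convergenceDomain, mem_ofPred_eq, mem_inter_iff, neg_lt_iff_pos_add, add_re, one_re]

theorem eventually_threeTermDefect_eq_zero : ∀ᶠ v : Fin 5 → ℂ in 𝓝 ![1, 1 / 4, 1 / 2, 1, 1],
    threeTermDefect (v 0) (v 1) (v 2) (v 3) (v 4) = 0 := by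
  set v₀ : Fin 5 → ℂ := ![1, 1 / 4, 1 / 2, 1, 1] with hv₀
  have eventually_re_mem (f : (Fin 5 → ℂ) → ℂ) (hf : Continuous f) {s : Set ℝ} (hs : IsOpen s)
      (h : (f v₀).re ∈ s) : ∀ᶠ v in 𝓝 v₀, (f v).re ∈ s :=
    (continuous_re.comp hf).continuousAt.eventually_mem (hs.mem_nhds h)
  filter_upwards [
    eventually_re_mem (fun v ↦ v 0) (by fun_prop) (isOpen_Ioo (a := 1 / 2) (b := 1 / 2 + 1))
      (by simp only [hv₀, Matrix.cons_val]; norm_num),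
    eventually_re_mem (fun v ↦ v 3) (by fun_prop) (isOpen_Ioo (a := 1 / 2) (b := 1 / 2 + 1))
      (by simp only [hv₀, Matrix.cons_val]; norm_num),
    eventually_re_mem (fun v ↦ v 3 - v 1) (by fun_prop)
      (isOpen_Ioo (a := 1 / 2) (b := 1 / 2 + 1)) (by simp only [hv₀, Matrix.cons_val]; norm_num),
    eventually_re_mem (fun v ↦ v 2) (by fun_prop) (isOpen_Ioi (a := 0))
      (by simp only [hv₀, Matrix.cons_val]; norm_num),
    eventually_re_mem (fun v ↦ v 4 - v 2) (by fun_prop) (isOpen_Ioi (a := 0))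
      (by simp only [hv₀, Matrix.cons_val]; norm_num),
    eventually_re_mem (fun v ↦ v 3 + v 4 - v 0 - v 1 - v 2) (by fun_prop) (isOpen_Ioi (a := 0))
      (by simp only [hv₀, Matrix.cons_val]; norm_num),
    eventually_re_mem (fun v ↦ v 2 - v 3 + 1) (by fun_prop) (isOpen_Ioi (a := 0))
      (by simp only [hv₀, Matrix.cons_val]; norm_num)] with v
  exact threeTermDefect_eq_zero_of_re_mem_Ioo one_half_pos

theorem threeTermDefect_eq_zero {a b c d e : ℂ} (hs : 0 < (d + e - a - b - c).re)
    (hcd : 0 < (c - d + 1).re) : threeTermDefect a b c d e = 0 := by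
  let f (v : Fin 5 → ℂ) : ℂ := threeTermDefect (v 0) (v 1) (v 2) (v 3) (v 4)
  have hf (p q : Fin 5 → ℂ) (z : ℂ) (hz : p + z • q ∈ convergenceDomain) :
      AnalyticAt ℂ (fun z : ℂ ↦ f (p + z • q)) z := by
    have hcoord (i : Fin 5) : AnalyticAt ℂ (fun z : ℂ ↦ (p + z • q) i) z := by
      simp only [Pi.add_apply, Pi.smul_apply, smul_eq_mul]
      fun_prop
    exact analyticAt_threeTermDefect (hcoord 0) (hcoord 1) (hcoord 2) (hcoord 3) (hcoord 4)
      hz.1 hz.2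
  have hbase : ![1, 1 / 4, 1 / 2, 1, 1] ∈ convergenceDomain := by
    simp only [convergenceDomain, mem_ofPred_eq, Matrix.cons_val]
    norm_num
  have habcde : ![a, b, c, d, e] ∈ convergenceDomain := by
    simpa [convergenceDomain] using And.intro hs hcd
  simpa [f] using eqOn_zero_of_analyticAt_lines convex_convergenceDomain hf hbase
    eventually_threeTermDefect_eq_zero habcde

theorem Gamma_neg_mul_Gamma_add_one (z : ℂ) :
    Gamma (-z) * Gamma (z + 1) = -(Gamma z * Gamma (1 - z)) := by
  have hneg := Gamma_mul_Gamma_one_sub (-z)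
  rw [sub_neg_eq_add, add_comm 1, mul_neg, sin_neg, div_neg] at hneg
  rw [hneg, Gamma_mul_Gamma_one_sub]

theorem regularizedF32_eq_add {a b c d e : ℂ} (hs : 0 < (d + e - a - b - c).re)
    (hcd : 0 < (c - d + 1).re) (hdab : NotPole (d - a - b)) (habd : NotPole (a + b - d + 1)) :
    regularizedF32 a b c d e =
      Gamma (d - a - b) * Gamma (a + b - d + 1) / (Gamma (d - a) * Gamma (d - b)) *
        regularizedF32 a b (e - c) (a + b - d + 1) e +
      Gamma (a + b - d) * Gamma (d - a - b + 1) * Gamma (d + e - a - b - c) /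
        (Gamma a * Gamma b * Gamma (e - c)) *
        regularizedF32 (d - a) (d - b) (d + e - a - b - c) (d - a - b + 1) (d + e - a - b) := by
  have hdefect := threeTermDefect_eq_zero hs hcd
  have hreflect := Gamma_neg_mul_Gamma_add_one (d - a - b)
  rw [show -(d - a - b) = a + b - d by ring,
    show 1 - (d - a - b) = a + b - d + 1 by ring] at hreflect
  rw [threeTermDefect, ← Gamma_inv_mul_Gamma_one_sub_inv,
    show 1 - (d - a - b) = a + b - d + 1 by ring] at hdefect
  have := hdab.Gamma_ne_zero
  have := habd.Gamma_ne_zero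
  have hcancel : Gamma (d - a - b) * Gamma (a + b - d + 1) * ((Gamma (d - a - b))⁻¹ *
      (Gamma (a + b - d + 1))⁻¹ * regularizedF32 a b c d e) = regularizedF32 a b c d e := by
    field_simp
  rw [hreflect]
  linear_combination Gamma (d - a - b) * Gamma (a + b - d + 1) * hdefect - hcancel

theorem F32_transformation_two_terms (α₁ α₂ α₃ β₁ β₂ : ℂ)
    (h₁ : 0 < (β₁ + β₂ - α₁ - α₂ - α₃).re) (h₂ : 0 < (α₃ - β₁ + 1).re)
    (hβ₁ : NotPole β₁) (hβ₂ : NotPole β₂)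
    (hl₁ : NotPole (α₁ + α₂ - β₁ + 1)) (hl₂ : NotPole (β₁ - α₁ - α₂ + 1))
    (hl₃ : NotPole (β₁ + β₂ - α₁ - α₂))
    (hg₁ : NotPole (β₁ - α₁ - α₂)) (hg₂ : NotPole (β₁ - α₁)) (hg₃ : NotPole (β₁ - α₂))
    (hg₄ : NotPole (α₁ + α₂ - β₁)) (hg₅ : NotPole (β₁ + β₂ - α₁ - α₂ - α₃))
    (hg₆ : NotPole α₁) (hg₇ : NotPole α₂) (hg₈ : NotPole (β₂ - α₃)) :
    F32 α₁ α₂ α₃ β₁ β₂ =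
      Complex.Gamma β₁ * Complex.Gamma (β₁ - α₁ - α₂) /
          (Complex.Gamma (β₁ - α₁) * Complex.Gamma (β₁ - α₂)) *
        F32 α₁ α₂ (β₂ - α₃) (α₁ + α₂ - β₁ + 1) β₂ +
      Complex.Gamma β₁ * Complex.Gamma β₂ * Complex.Gamma (α₁ + α₂ - β₁) *
          Complex.Gamma (β₁ + β₂ - α₁ - α₂ - α₃) /
          (Complex.Gamma α₁ * Complex.Gamma α₂ * Complex.Gamma (β₂ - α₃) *
            Complex.Gamma (β₁ + β₂ - α₁ - α₂)) *
        F32 (β₁ - α₁) (β₁ - α₂) (β₁ + β₂ - α₁ - α₂ - α₃) (β₁ - α₁ - α₂ + 1)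
          (β₁ + β₂ - α₁ - α₂) := by
  have := hl₃.Gamma_ne_zero
  rw [F32_eq_Gamma_mul_regularizedF32 hβ₁ hβ₂, F32_eq_Gamma_mul_regularizedF32 hl₁ hβ₂,
    F32_eq_Gamma_mul_regularizedF32 hl₂ hl₃, regularizedF32_eq_add h₁ h₂ hg₁ hl₁]
  field_simp
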